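/- arXiv:2506.09019 — 3 statements merged into one kernel-verified Lean document; each statement's English description precedes it below -/
import Mathlib

section
/- Let p > 3 be a prime, let k be a field of characteristic p, and let d ≥ 2. Then there exist real numbers L_R and L_S such that the sequence e ↦ dim_k( k[x_0,…,x_d]/(x_0^{p^e},…,x_d^{p^e}, x_0² + x_1² + ⋯ + x_d²) ) / p^{d·e} converges to L_R, the sequence e ↦ dim_k( k[x_0,…,x_d]/(x_0^{p^e},…,x_d^{p^e}, x_0² + ⋯ + x_{d−1}² + x_d³) ) / p^{d·e} converges to L_S, and L_S > L_R. That is, e_HK(S_{p,d}) > e_HK(R_{p,d}) for all primes p > 3 and d ≥ 2. -/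
open MvPolynomial

/-- The Hilbert–Kunz function of the hypersurface defined by `f` in `n` variables,
in characteristic `p`, at level `e`. -/
noncomputable def HKfun (k : Type*) [Field k] (n p e : ℕ)
    (f : MvPolynomial (Fin n) k) : ℕ :=
  Module.finrank k
    (MvPolynomial (Fin n) k ⧸
      Ideal.span
        (Set.range (fun i : Fin n => (X i : MvPolynomial (Fin n) k) ^ p ^ e) ∪ {f}))

/-!
Let `F = ∑ x_i ^ 2` in `d` variables, `A_e = k[x_1, …, x_d] / (x_i ^ (p ^ e))` and
`φ_e j = dim A_e / (F ^ j)`. The increment `φ_e (j + 1) - φ_e j` is the number of Jordan blocks of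
length greater than `j` of the multiplication by `F` on `A_e`, so `φ_e` is concave; and
`φ_{e + 1} (p * j) = p ^ d * φ_e j`. Division by `z ^ m + F` shows that the Hilbert–Kunz function
of `F + z ^ m` is the sum of `φ_e` over the most even partition of `p ^ e` into `m` parts. By
concavity the most even partition has the largest sum. Comparing it at level `e + 1` with `p` times
the one at level `e` shows that the normalized sums increase, so they converge.

For the strict inequality let `p = 2 * a + 1`. The multiplication by `F` on `A_1` has a Jordan block
of length less than `a`, so `φ_1 a < a * φ_1 1`: the chord of `φ_1` over `[1, a]` has a positive
value at `0`. Scaled to level `e + 1`, this chord lies above `φ_{e + 1}` at the parts of the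
partition of `p ^ (e + 1)` into two and below it at the parts of the partition into three. As the
sum of an affine function over a partition grows by its value at `0` with each further part, the
three parts win by a fixed positive proportion.
-/

section ConcaveSequences

variable {D : ℕ → ℝ}

theorem le_tangent_of_antitone_sub (hD : Antitone fun n => D (n + 1) - D n) (b n : ℕ) :
    D n ≤ D b + (n - b) * (D (b + 1) - D b) := by
  rcases le_total b n with hbn | hnb
  · have hsum : ∑ i ∈ Finset.Ico b n, (D (i + 1) - D i) ≤ (n - b) * (D (b + 1) - D b) := by
      have := Finset.sum_le_card_nsmul (Finset.Ico b n) _ _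
        fun i hi => hD (Finset.mem_Ico.1 hi).1
      simpa [Nat.cast_sub hbn] using this
    rw [Finset.sum_Ico_sub D hbn] at hsum
    linarith
  · have hsum : (b - n) * (D (b + 1) - D b) ≤ ∑ i ∈ Finset.Ico n b, (D (i + 1) - D i) := by
      have := Finset.card_nsmul_le_sum (Finset.Ico n b) _ _
        fun i hi => hD (Finset.mem_Ico.1 hi).2.le
      simpa [Nat.cast_sub hnb] using this
    rw [Finset.sum_Ico_sub D hnb] at hsum
    linarith

theorem chord_le_of_antitone_sub (hD : Antitone fun n => D (n + 1) - D n) {x y z : ℕ}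
    (hxy : x ≤ y) (hyz : y ≤ z) :
    ((z : ℝ) - y) * D x + (y - x) * D z ≤ (z - x) * D y := by
  have hx := le_tangent_of_antitone_sub hD y x
  have hz := le_tangent_of_antitone_sub hD y z
  have hxy' : (0 : ℝ) ≤ y - x := sub_nonneg.2 (by exact_mod_cast hxy)
  have hyz' : (0 : ℝ) ≤ z - y := sub_nonneg.2 (by exact_mod_cast hyz)
  linear_combination ((z : ℝ) - y) * hx + ((y : ℝ) - x) * hz

theorem sum_range_add_div {m : ℕ} (hm : 0 < m) (N : ℕ) :
    ∑ i ∈ Finset.range m, (N + i) / m = N := by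
  induction N with
  | zero =>
    exact Finset.sum_eq_zero fun i hi => by simpa using Nat.div_eq_of_lt (Finset.mem_range.1 hi)
  | succ N ih =>
    have hlast := Finset.sum_range_succ (fun i => (N + i) / m) m
    have hfirst := Finset.sum_range_succ' (fun i => (N + i) / m) m
    rw [hlast, ih, Nat.add_div_right _ hm, add_zero] at hfirst
    simp only [add_assoc, add_comm 1]
    lia

theorem add_div_eq_or_eq_succ {m i : ℕ} (hi : i < m) (N : ℕ) :
    (N + i) / m = N / m ∨ (N + i) / m = N / m + 1 := by
  have hlower : N / m ≤ (N + i) / m := Nat.div_le_div_right (Nat.le_add_right N i)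
  have hupper : (N + i) / m ≤ (N + m) / m := Nat.div_le_div_right (by lia)
  rw [Nat.add_div_right _ (by lia)] at hupper
  lia

/-- The sum of the values of `D` at the parts of the most even partition of `N` into `m` parts;
these parts are the numbers `⌊(N + i) / m⌋` for `0 ≤ i < m`. -/
noncomputable def evenSum (D : ℕ → ℝ) (m N : ℕ) : ℝ :=
  ∑ i ∈ Finset.range m, D ((N + i) / m)

theorem sum_range_affine_add_div {m : ℕ} (hm : 0 < m) (N : ℕ) (α β : ℝ) :
    ∑ i ∈ Finset.range m, (α + β * ((N + i) / m : ℕ)) = m * α + β * N := by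
  rw [Finset.sum_add_distrib, ← Finset.mul_sum, ← Nat.cast_sum, sum_range_add_div hm]
  simp

theorem sum_le_evenSum (hD : Antitone fun n => D (n + 1) - D n) {m : ℕ} (hm : 0 < m)
    (part : ℕ → ℕ) :
    ∑ i ∈ Finset.range m, D (part i) ≤ evenSum D m (∑ i ∈ Finset.range m, part i) := by
  set N := ∑ i ∈ Finset.range m, part i with hN
  set b := N / m
  set s := D (b + 1) - D b with hs
  have hparts : ∀ i ∈ Finset.range m, D ((N + i) / m) = (D b - s * b) + s * ((N + i) / m : ℕ) := by
    intro i hi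
    rcases add_div_eq_or_eq_succ (Finset.mem_range.1 hi) N with h | h <;> rw [h]
    · ring
    · push_cast
      rw [hs]
      ring
  calc ∑ i ∈ Finset.range m, D (part i)
      ≤ ∑ i ∈ Finset.range m, ((D b - s * b) + s * part i) :=
        Finset.sum_le_sum fun i _ => by
          linarith [le_tangent_of_antitone_sub hD b (part i)]
    _ = m * (D b - s * b) + s * N := by
        rw [Finset.sum_add_distrib, ← Finset.mul_sum, ← Nat.cast_sum, ← hN, Finset.sum_const,
          Finset.card_range, nsmul_eq_mul]
    _ = evenSum D m N := by
        rw [evenSum, Finset.sum_congr rfl hparts, sum_range_affine_add_div hm]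

-- The chord of `D` over `[x, y]` lies below `D` at the `n` parts and above `D` at the `m` parts,
-- and its values over the parts of `N` sum to (number of parts) * (value at `0`) + slope * `N`.
theorem evenSum_add_le_evenSum (hD : Antitone fun n => D (n + 1) - D n) {m n x y N : ℕ}
    (hm : 0 < m) (hn : 0 < n) (hxy : x ≤ y) (hmy : m * y ≤ N) (hnx : n * x ≤ N)
    (hny : N ≤ n * y) :
    ((y : ℝ) - x) * evenSum D m N + (n - m) * (y * D x - x * D y) ≤
      (y - x) * evenSum D n N := by
  have hupper : ((y : ℝ) - x) * evenSum D m N ≤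
      m * (y * D x - x * D y) + (D y - D x) * N := by
    rw [evenSum, Finset.mul_sum, ← sum_range_affine_add_div hm]
    refine Finset.sum_le_sum fun i _ => ?_
    have hpart : y ≤ (N + i) / m := (Nat.le_div_iff_mul_le hm).2 (by lia)
    linarith [chord_le_of_antitone_sub hD hxy hpart]
  have hlower : n * (y * D x - x * D y) + (D y - D x) * N ≤
      ((y : ℝ) - x) * evenSum D n N := by
    rw [evenSum, Finset.mul_sum, ← sum_range_affine_add_div hn]
    refine Finset.sum_le_sum fun i hi => ?_
    have hi := Finset.mem_range.1 hi
    have hxpart : x ≤ (N + i) / n := (Nat.le_div_iff_mul_le hn).2 (by lia)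
    have hparty : (N + i) / n ≤ y := by
      rw [← Nat.lt_add_one_iff, Nat.div_lt_iff_lt_mul hn]
      lia
    linarith [chord_le_of_antitone_sub hD hxpart hparty]
  linarith

theorem evenSum_le_evenSum_succ (hD : Antitone fun n => D (n + 1) - D n) (hD₀ : 0 ≤ D 0) {m : ℕ}
    (hm : 0 < m) (N : ℕ) : evenSum D m N ≤ evenSum D (m + 1) N := by
  let part (i : ℕ) : ℕ := if i < m then (N + i) / m else 0
  have hpart {i : ℕ} (hi : i ∈ Finset.range m) : part i = (N + i) / m :=
    if_pos (Finset.mem_range.1 hi)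
  have hlast : part m = 0 := if_neg (lt_irrefl m)
  have hsum : ∑ i ∈ Finset.range (m + 1), part i = N := by
    rw [Finset.sum_range_succ, hlast, Finset.sum_congr rfl fun i hi => hpart hi,
      sum_range_add_div hm, add_zero]
  have hle := sum_le_evenSum hD m.succ_pos part
  rw [hsum, Finset.sum_range_succ, hlast, Finset.sum_congr rfl fun i hi => by rw [hpart hi]] at hle
  exact (le_add_of_nonneg_right hD₀).trans hle

theorem evenSum_le_evenSum_of_le (hD : Antitone fun n => D (n + 1) - D n) (hD₀ : 0 ≤ D 0)
    {m n : ℕ} (hm : 0 < m) (hmn : m ≤ n) (N : ℕ) : evenSum D m N ≤ evenSum D n N := by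
  induction n, hmn using Nat.le_induction with
  | base => exact le_rfl
  | succ n hmn ih => exact ih.trans (evenSum_le_evenSum_succ hD hD₀ (hm.trans_le hmn) N)

end ConcaveSequences

section Scaling

open Filter Topology

variable {D : ℕ → ℕ → ℝ} {p d m : ℕ}

theorem monotone_evenSum_div_pow (hD : ∀ e, Antitone fun n => D e (n + 1) - D e n)
    (hscale : ∀ e j, D (e + 1) (p * j) = (p : ℝ) ^ d * D e j) (hp : 0 < p) (hm : 0 < m) :
    Monotone fun e => evenSum (D e) m (p ^ e) / (p : ℝ) ^ (d * e) := by
  have hpow : ∀ e, (0 : ℝ) < (p : ℝ) ^ e := fun e => pow_pos (by exact_mod_cast hp) e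
  refine monotone_nat_of_le_succ fun e => ?_
  have hstep : (p : ℝ) ^ d * evenSum (D e) m (p ^ e) ≤ evenSum (D (e + 1)) m (p ^ (e + 1)) := by
    have h := sum_le_evenSum (hD (e + 1)) hm fun i => p * ((p ^ e + i) / m)
    rwa [← Finset.mul_sum, sum_range_add_div hm, ← pow_succ', Finset.sum_congr rfl
      fun i _ => hscale e ((p ^ e + i) / m), ← Finset.mul_sum] at h
  rw [div_le_div_iff₀ (hpow _) (hpow _), mul_add_one, pow_add]
  linear_combination (p : ℝ) ^ (d * e) * hstep

theorem exists_tendsto_evenSum_div_pow (hD : ∀ e, Antitone fun n => D e (n + 1) - D e n)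
    (hscale : ∀ e j, D (e + 1) (p * j) = (p : ℝ) ^ d * D e j) (hp : 0 < p) (hm : 0 < m)
    {C : ℝ} (hbound : ∀ e j, D e j ≤ C * (p : ℝ) ^ (d * e)) :
    ∃ L, Tendsto (fun e => evenSum (D e) m (p ^ e) / (p : ℝ) ^ (d * e)) atTop (𝓝 L) := by
  refine ⟨_, tendsto_atTop_ciSup (monotone_evenSum_div_pow hD hscale hp hm) ⟨m * C, ?_⟩⟩
  rintro _ ⟨e, rfl⟩
  have hsum := Finset.sum_le_card_nsmul (Finset.range m) _ _
    fun i _ => hbound e ((p ^ e + i) / m)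
  rw [div_le_iff₀ (pow_pos (by exact_mod_cast hp) _)]
  simpa [evenSum, mul_assoc] using hsum

theorem scale_pow (hscale : ∀ e j, D (e + 1) (p * j) = (p : ℝ) ^ d * D e j) (e l j : ℕ) :
    D (e + l) (p ^ e * j) = (p : ℝ) ^ (d * e) * D l j := by
  induction e generalizing j with
  | zero => simp
  | succ e ih =>
    rw [pow_succ', mul_assoc, Nat.add_right_comm, hscale, ih]
    ring

theorem evenSum_add_le_evenSum_pow (hD : ∀ e, Antitone fun n => D e (n + 1) - D e n)
    (hscale : ∀ e j, D (e + 1) (p * j) = (p : ℝ) ^ d * D e j) {n a : ℕ} (hp : 0 < p) (hm : 0 < m)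
    (hn : 0 < n) (ha : 0 < a) (hma : m * a ≤ p) (hnp : n ≤ p) (hpa : p ≤ n * a) (e : ℕ) :
    ((a : ℝ) - 1) * evenSum (D (e + 1)) m (p ^ (e + 1)) +
        (n - m) * (a * D 1 1 - D 1 a) * (p : ℝ) ^ (d * e) ≤
      (a - 1) * evenSum (D (e + 1)) n (p ^ (e + 1)) := by
  have hchord := evenSum_add_le_evenSum (hD (e + 1)) hm hn (x := p ^ e * 1) (y := p ^ e * a)
    (N := p ^ e * p) (Nat.mul_le_mul_left _ ha)
    ((Nat.mul_left_comm _ _ _).trans_le (Nat.mul_le_mul_left _ hma))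
    ((Nat.mul_left_comm _ _ _).trans_le (Nat.mul_le_mul_left _ (by rwa [mul_one])))
    ((Nat.mul_le_mul_left _ hpa).trans_eq (Nat.mul_left_comm _ _ _))
  rw [scale_pow hscale e 1 a, scale_pow hscale e 1 1, ← pow_succ] at hchord
  push_cast at hchord
  have hpe : (0 : ℝ) < (p : ℝ) ^ e := pow_pos (by exact_mod_cast hp) e
  refine le_of_mul_le_mul_left ?_ hpe
  linarith

theorem lt_of_tendsto_evenSum_div_pow (hD : ∀ e, Antitone fun n => D e (n + 1) - D e n)
    (hscale : ∀ e j, D (e + 1) (p * j) = (p : ℝ) ^ d * D e j) {n a : ℕ} (hm : 0 < m) (hmn : m < n)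
    (hnp : n ≤ p) (hma : m * a ≤ p) (hpa : p ≤ n * a) (ha : 1 < a) (hstrict : D 1 a < a * D 1 1)
    {L M : ℝ} (hL : Tendsto (fun e => evenSum (D e) m (p ^ e) / (p : ℝ) ^ (d * e)) atTop (𝓝 L))
    (hM : Tendsto (fun e => evenSum (D e) n (p ^ e) / (p : ℝ) ^ (d * e)) atTop (𝓝 M)) :
    L < M := by
  have hp : 0 < p := by lia
  have hpow : ∀ e, (0 : ℝ) < (p : ℝ) ^ e := fun e => pow_pos (by exact_mod_cast hp) e
  have ha' : (0 : ℝ) < a - 1 := sub_pos.2 (by exact_mod_cast ha)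
  have hmn' : (0 : ℝ) < n - m := sub_pos.2 (by exact_mod_cast hmn)
  set gap := (n - m) * (a * D 1 1 - D 1 a) / (p : ℝ) ^ d with hgap
  have gap_pos : 0 < gap := div_pos (mul_pos hmn' (sub_pos.2 hstrict)) (hpow d)
  suffices hle : (a - 1) * L + gap ≤ (a - 1) * M from
    lt_of_mul_lt_mul_left (by linarith) ha'.le
  refine le_of_tendsto_of_tendsto ((hL.const_mul _).add_const gap) (hM.const_mul _) ?_
  filter_upwards [eventually_ge_atTop 1] with e he
  obtain ⟨e, rfl⟩ := Nat.exists_eq_add_of_le' he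
  have hchord := evenSum_add_le_evenSum_pow hD hscale hp hm (by lia) (by lia) hma hnp hpa e
  have hgap_mul : (n - m) * (a * D 1 1 - D 1 a) * (p : ℝ) ^ (d * e) =
      gap * (p : ℝ) ^ (d * (e + 1)) := by
    rw [hgap, mul_add_one, pow_add, mul_comm (_ ^ _), ← mul_assoc, div_mul_cancel₀ _ (hpow d).ne']
  rw [hgap_mul] at hchord
  rw [← mul_div_assoc, ← mul_div_assoc, div_add' _ _ _ (hpow _).ne']
  exact div_le_div_of_nonneg_right hchord (hpow _).le

end Scaling

section JordanBlocks

variable {k V A : Type*} [Field k] [AddCommGroup V] [Module k V] [FiniteDimensional k V]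
  [CommRing A] [Algebra k A]

theorem finrank_map_add_finrank_ker_inf (T : Module.End k V) (W : Submodule k V) :
    Module.finrank k (W.map T) + Module.finrank k (T.ker ⊓ W : Submodule k V) =
      Module.finrank k W := by
  rw [← LinearMap.finrank_range_add_finrank_ker (T.domRestrict W), LinearMap.range_domRestrict,
    LinearMap.ker_domRestrict, ← Submodule.finrank_map_subtype_eq W, Submodule.map_comap_subtype,
    inf_comm]

variable (k) in
/-- The number of Jordan blocks of length greater than `n` of the multiplication by `F` on the
`k`-algebra `A`, when the latter is finite-dimensional and `F` is nilpotent. -/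
noncomputable def numBlocksGT (F : A) (n : ℕ) : ℕ :=
  Module.finrank k
    ((LinearMap.mulLeft k F).ker ⊓ (Ideal.span {F ^ n}).restrictScalars k : Submodule k A)

theorem map_mulLeft_span_pow (F : A) (n : ℕ) :
    ((Ideal.span {F ^ n}).restrictScalars k).map (LinearMap.mulLeft k F) =
      (Ideal.span {F ^ (n + 1)}).restrictScalars k := by
  ext a
  simp only [Submodule.mem_map, Submodule.restrictScalars_mem, Ideal.mem_span_singleton,
    LinearMap.mulLeft_apply, pow_succ']
  constructor
  · rintro ⟨_, ⟨b, rfl⟩, rfl⟩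
    exact ⟨b, by ring⟩
  · rintro ⟨b, rfl⟩
    exact ⟨F ^ n * b, dvd_mul_right _ _, by ring⟩

variable [FiniteDimensional k A]

theorem finrank_quotient_span_pow_succ (F : A) (n : ℕ) :
    Module.finrank k (A ⧸ Ideal.span {F ^ (n + 1)}) =
      Module.finrank k (A ⧸ Ideal.span {F ^ n}) + numBlocksGT k F n := by
  have hn := ((Ideal.span {F ^ n}).restrictScalars k).finrank_quotient_add_finrank
  have hsucc := ((Ideal.span {F ^ (n + 1)}).restrictScalars k).finrank_quotient_add_finrank
  have hstep := finrank_map_add_finrank_ker_inf (LinearMap.mulLeft k F)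
    ((Ideal.span {F ^ n}).restrictScalars k)
  rw [map_mulLeft_span_pow] at hstep
  change Module.finrank k (A ⧸ Ideal.span {F ^ n}) + _ = _ at hn
  change Module.finrank k (A ⧸ Ideal.span {F ^ (n + 1)}) + _ = _ at hsucc
  rw [numBlocksGT]
  lia

theorem finrank_quotient_span_pow (F : A) (n : ℕ) :
    Module.finrank k (A ⧸ Ideal.span {F ^ n}) = ∑ i ∈ Finset.range n, numBlocksGT k F i := by
  induction n with
  | zero => simp [Module.finrank_zero_of_subsingleton]
  | succ n ih => rw [finrank_quotient_span_pow_succ, ih, Finset.sum_range_succ]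

theorem antitone_numBlocksGT (F : A) : Antitone (numBlocksGT k F) := fun _ _ hmn =>
  Submodule.finrank_mono <| inf_le_inf_left _ <|
    Ideal.span_singleton_le_span_singleton.2 (pow_dvd_pow F hmn)

theorem numBlocksGT_lt_numBlocksGT_zero {F g g' : A} {n : ℕ} (hg : F ^ n * g = 0)
    (hg' : F * g' = 0) (hgg' : g * g' ≠ 0) : numBlocksGT k F n < numBlocksGT k F 0 := by
  refine Submodule.finrank_lt_finrank_of_lt (lt_of_le_of_ne ?_ fun heq => hgg' ?_)
  · exact inf_le_inf_left _ (Ideal.span_singleton_le_span_singleton.2 (pow_dvd_pow F n.zero_le))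
  · have hmem : g' ∈ (LinearMap.mulLeft k F).ker ⊓ (Ideal.span {F ^ n}).restrictScalars k := by
      rw [heq]
      simpa using hg'
    obtain ⟨v, rfl⟩ := Ideal.mem_span_singleton.1 (Submodule.mem_inf.1 hmem).2
    linear_combination v * hg

theorem finrank_quotient_span_pow_lt {F g g' : A} {n : ℕ} (hg : F ^ n * g = 0)
    (hg' : F * g' = 0) (hgg' : g * g' ≠ 0) :
    Module.finrank k (A ⧸ Ideal.span {F ^ (n + 1)}) <
      (n + 1) * Module.finrank k (A ⧸ Ideal.span {F ^ 1}) := by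
  rw [finrank_quotient_span_pow, finrank_quotient_span_pow, Finset.sum_range_one]
  have hlt := Finset.sum_lt_sum (s := Finset.range (n + 1)) (g := fun _ => numBlocksGT k F 0)
    (fun i _ => antitone_numBlocksGT (k := k) F i.zero_le)
    ⟨n, Finset.self_mem_range_succ n, numBlocksGT_lt_numBlocksGT_zero hg hg' hgg'⟩
  simpa using hlt

end JordanBlocks

section Components

variable {k A B : Type*} [Field k] [CommRing A] [Algebra k A] [CommRing B] [Algebra k B]

theorem finrank_quotient_eq_sum {ι : Type*} [Fintype ι] {J : Ideal B} {K : ι → Ideal A}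
    [∀ i, FiniteDimensional k (A ⧸ K i)] {c : ι → B →ₗ[k] A}
    (hsurj : Function.Surjective (LinearMap.pi c)) (hJ : ∀ b, b ∈ J ↔ ∀ i, c i b ∈ K i) :
    Module.finrank k (B ⧸ J) = ∑ i, Module.finrank k (A ⧸ K i) := by
  let reduce : B →ₗ[k] ∀ i, A ⧸ K i :=
    LinearMap.pi fun i => (Ideal.Quotient.mkₐ k (K i)).toLinearMap ∘ₗ c i
  have hker : J.restrictScalars k = reduce.ker := by
    ext b
    simp [reduce, hJ, funext_iff, Ideal.Quotient.eq_zero_iff_mem]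
  have hreduce : Function.Surjective reduce :=
    (Function.Surjective.piMap fun i => (Ideal.Quotient.mk_surjective (I := K i))).comp hsurj
  rw [← Module.finrank_pi_fintype k]
  exact ((Submodule.quotEquivOfEq _ _ hker).trans
    (reduce.quotKerEquivOfSurjective hreduce)).finrank_eq

theorem map_mem_of_mem_span {c : B →ₗ[k] A} {K : Ideal A} {S : Set B}
    (hS : ∀ s ∈ S, ∀ b, c (b * s) ∈ K) {b : B} (hb : b ∈ Ideal.span S) : c b ∈ K := by
  induction hb using Submodule.closure_induction with
  | zero => simp
  | add x y _ _ hx hy =>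
    rw [map_add]
    exact K.add_mem hx hy
  | smul_mem b s hs => exact hS s hs b

end Components

section Expand

variable {k σ : Type*} [Field k] [Fintype σ] {p : ℕ}

/-- The exponent vector of the monomial with exponents `r i < p`; these monomials form a basis of
the polynomial ring over the image of `expand p`. -/
noncomputable def remainderExponent (r : σ → Fin p) : σ →₀ ℕ :=
  Finsupp.equivFunOnFinite.symm fun i => (r i : ℕ)

/-- The coordinate `P_r` in the decomposition `P = ∑ r, x ^ r * expand p P_r`, where the exponents
of the monomials `x ^ r` are less than `p`. -/
noncomputable def expandCoord (r : σ → Fin p) : MvPolynomial σ k →ₗ[k] MvPolynomial σ k :=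
  (basisMonomials σ k).constr k fun t =>
    if ∀ i, t i % p = r i then monomial (t.mapRange (· / p) (Nat.zero_div p)) 1 else 0

theorem expandCoord_monomial (r : σ → Fin p) (t : σ →₀ ℕ) (c : k) :
    expandCoord r (monomial t c) =
      if ∀ i, t i % p = r i then monomial (t.mapRange (· / p) (Nat.zero_div p)) c else 0 := by
  have hbasis : monomial t c = c • basisMonomials σ k t := by simp [smul_monomial]
  rw [hbasis, map_smul, expandCoord, Module.Basis.constr_basis]
  split_ifs <;> simp [smul_monomial]

theorem expandCoord_expand_mul (hp : 0 < p) (r : σ → Fin p) (P Q : MvPolynomial σ k) :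
    expandCoord r (expand p Q * P) = Q * expandCoord r P := by
  induction P using MvPolynomial.induction_on' with
  | add P P' hP hP' => rw [mul_add, map_add, map_add, mul_add, hP, hP']
  | monomial t c =>
    induction Q using MvPolynomial.induction_on' with
    | add Q Q' hQ hQ' => rw [map_add, add_mul, map_add, add_mul, hQ, hQ']
    | monomial s b =>
      have hdiv : (p • s + t).mapRange (· / p) (Nat.zero_div p) =
          s + t.mapRange (· / p) (Nat.zero_div p) := by
        ext i
        simp [Nat.mul_add_div hp]
      rw [expand_monomial, monomial_mul, expandCoord_monomial, expandCoord_monomial, hdiv]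
      simp [monomial_mul]

theorem sum_monomial_mul_expand_expandCoord [DecidableEq σ] (hp : 0 < p) (P : MvPolynomial σ k) :
    ∑ r : σ → Fin p, monomial (remainderExponent r) 1 * expand p (expandCoord r P) = P := by
  induction P using MvPolynomial.induction_on' with
  | add P P' hP hP' => simp only [map_add, mul_add, Finset.sum_add_distrib, hP, hP']
  | monomial t c =>
    rw [Finset.sum_eq_single fun i => ⟨t i % p, Nat.mod_lt _ hp⟩]
    · have ht : remainderExponent (fun i => ⟨t i % p, Nat.mod_lt _ hp⟩) +
          p • t.mapRange (· / p) (Nat.zero_div p) = t := by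
        ext i
        simp [remainderExponent, Nat.mod_add_div]
      simp [expandCoord_monomial, ht]
    · intro r _ hr
      have hne : ¬∀ i, t i % p = r i := fun h => hr (by ext i; simp [h])
      simp [expandCoord_monomial, hne]
    · simp

theorem expandCoord_monomial_mul_expand (hp : 0 < p) (r s : σ → Fin p)
    (Q : MvPolynomial σ k) :
    expandCoord r (monomial (remainderExponent s) 1 * expand p Q) = if s = r then Q else 0 := by
  have hmod : (∀ i, remainderExponent s i % p = r i) ↔ s = r := by
    simp [remainderExponent, Nat.mod_eq_of_lt, funext_iff, Fin.ext_iff]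
  have hdiv : (remainderExponent s).mapRange (· / p) (Nat.zero_div p) = 0 := by
    ext i
    simp [remainderExponent]
  rw [mul_comm, expandCoord_expand_mul hp, expandCoord_monomial, hdiv]
  simp [hmod]

theorem finrank_quotient_map_expand (hp : 0 < p) (I : Ideal (MvPolynomial σ k))
    [FiniteDimensional k (MvPolynomial σ k ⧸ I)] :
    Module.finrank k (MvPolynomial σ k ⧸ I.map (expand (R := k) (σ := σ) p)) =
      p ^ Fintype.card σ * Module.finrank k (MvPolynomial σ k ⧸ I) := by
  classical
  have hsurj : Function.Surjective (LinearMap.pi (expandCoord (k := k) (σ := σ) (p := p))) := by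
    refine fun f => ⟨∑ s, monomial (remainderExponent s) 1 * expand p (f s), ?_⟩
    ext1 r
    simp [expandCoord_monomial_mul_expand hp]
  have hmem : ∀ P, P ∈ I.map (expand (R := k) (σ := σ) p) ↔
      ∀ r : σ → Fin p, expandCoord r P ∈ I := by
    refine fun P => ⟨fun hP r => map_mem_of_mem_span ?_ hP, fun hP => ?_⟩
    · rintro _ ⟨Q, hQ, rfl⟩ b
      rw [mul_comm]
      exact expandCoord_expand_mul hp r b Q ▸ I.mul_mem_right _ hQ
    · rw [← sum_monomial_mul_expand_expandCoord hp P]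
      exact Ideal.sum_mem _ fun r _ => Ideal.mul_mem_left _ _ (Ideal.mem_map_of_mem _ (hP r))
  simpa using finrank_quotient_eq_sum hsurj hmem

end Expand

section AddVariable

open scoped Polynomial

variable {k A : Type*} [Field k] [CommRing A] [Algebra k A]

variable (k) in
/-- The coefficient of `X ^ i` in the remainder of a polynomial modulo the monic polynomial `G`. -/
noncomputable def remainderCoeff (G : A[X]) (i : ℕ) : A[X] →ₗ[k] A :=
  (Polynomial.lcoeff A i ∘ₗ Polynomial.modByMonicHom G).restrictScalars k

theorem remainderCoeff_mul_C (G : A[X]) (i : ℕ) (P : A[X]) (a : A) :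
    remainderCoeff k G i (P * Polynomial.C a) = a * remainderCoeff k G i P := by
  rw [mul_comm, ← Polynomial.smul_eq_C_mul]
  simp [remainderCoeff]

theorem remainderCoeff_mul_self {G : A[X]} (hG : G.Monic) (i : ℕ) (P : A[X]) :
    remainderCoeff k G i (P * G) = 0 := by
  simp [remainderCoeff, Polynomial.modByMonicHom, Polynomial.mul_self_modByMonic hG]

theorem X_pow_modByMonic_X_pow_add_C [Nontrivial A] {m : ℕ} (hm : m ≠ 0) (F : A) (n : ℕ) :
    Polynomial.X ^ n %ₘ (Polynomial.X ^ m + Polynomial.C F) =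
      Polynomial.C ((-F) ^ (n / m)) * Polynomial.X ^ (n % m) := by
  have hG := Polynomial.monic_X_pow_add_C F hm
  have hdvd : Polynomial.X ^ m + Polynomial.C F ∣
      Polynomial.X ^ n - Polynomial.C ((-F) ^ (n / m)) * Polynomial.X ^ (n % m) := by
    have hfactor : Polynomial.X ^ n - Polynomial.C ((-F) ^ (n / m)) * Polynomial.X ^ (n % m) =
        ((Polynomial.X ^ m) ^ (n / m) - Polynomial.C (-F) ^ (n / m)) * Polynomial.X ^ (n % m) := by
      rw [sub_mul, ← pow_mul, ← pow_add, Nat.div_add_mod, Polynomial.C_pow]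
    rw [hfactor, ← sub_neg_eq_add, ← Polynomial.C_neg]
    exact (sub_dvd_pow_sub_pow _ _ _).mul_right _
  rw [Polynomial.modByMonic_eq_of_dvd_sub hG hdvd, Polynomial.modByMonic_eq_self_iff hG,
    Polynomial.degree_X_pow_add_C (by lia)]
  exact (Polynomial.degree_C_mul_X_pow_le _ _).trans_lt
    (by exact_mod_cast Nat.mod_lt n (by lia))

theorem remainderCoeff_X_pow [Nontrivial A] {m : ℕ} (hm : m ≠ 0) (F : A) (i n : ℕ) :
    remainderCoeff k (Polynomial.X ^ m + Polynomial.C F) i (Polynomial.X ^ n) =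
      if i = n % m then (-F) ^ (n / m) else 0 := by
  simp [remainderCoeff, Polynomial.modByMonicHom, X_pow_modByMonic_X_pow_add_C hm,
    Polynomial.coeff_X_pow, -map_pow]

theorem pow_dvd_remainderCoeff_mul_X_pow [Nontrivial A] {m q b i : ℕ} (hm : m ≠ 0) (F : A)
    (hb : ∀ n, q ≤ n → n % m = i → b ≤ n / m) (P : A[X]) :
    F ^ b ∣ remainderCoeff k (Polynomial.X ^ m + Polynomial.C F) i (P * Polynomial.X ^ q) := by
  induction P using Polynomial.induction_on' with
  | add P Q hP hQ =>
    rw [add_mul, map_add]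
    exact dvd_add hP hQ
  | monomial n a =>
    rw [← Polynomial.C_mul_X_pow_eq_monomial, mul_assoc, ← pow_add, mul_comm,
      remainderCoeff_mul_C, remainderCoeff_X_pow hm]
    split_ifs with hi
    · rw [neg_pow]
      exact ((pow_dvd_pow F (hb _ (Nat.le_add_left q n) hi.symm)).mul_left _).mul_left _
    · simp

theorem C_mul_X_pow_mem {m q b i : ℕ} {F : A} {I : Ideal A} {J : Ideal A[X]}
    (hI : I.map Polynomial.C ≤ J) (hX : Polynomial.X ^ q ∈ J)
    (hF : Polynomial.X ^ m + Polynomial.C F ∈ J) (hq : q ≤ m * b + i) {a : A}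
    (ha : a ∈ I ⊔ Ideal.span {F ^ b}) : Polynomial.C a * Polynomial.X ^ i ∈ J := by
  obtain ⟨y, hy, z, hz, rfl⟩ := Submodule.mem_sup.1 ha
  obtain ⟨z, rfl⟩ := Ideal.mem_span_singleton.1 hz
  have hFX : Polynomial.C (F ^ b) * Polynomial.X ^ i ∈ J := by
    have hdvd : Polynomial.X ^ m + Polynomial.C F ∣
        Polynomial.C (F ^ b) - (-Polynomial.X ^ m) ^ b := by
      rw [Polynomial.C_pow, add_comm, ← sub_neg_eq_add]
      exact sub_dvd_pow_sub_pow _ _ _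
    have hpow : (-Polynomial.X ^ m) ^ b * Polynomial.X ^ i ∈ J := by
      rw [neg_pow, ← pow_mul, mul_assoc, ← pow_add]
      exact J.mul_mem_left _ (J.mem_of_dvd (pow_dvd_pow Polynomial.X hq) hX)
    rw [← sub_add_cancel (Polynomial.C (F ^ b)) ((-Polynomial.X ^ m) ^ b), add_mul]
    exact J.add_mem (J.mul_mem_right _ (J.mem_of_dvd hdvd hF)) hpow
  rw [Polynomial.C_add, Polynomial.C_mul, add_mul, mul_right_comm]
  exact J.add_mem (J.mul_mem_right _ (hI (Ideal.mem_map_of_mem _ hy))) (J.mul_mem_right _ hFX)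

theorem mem_map_sup_span_iff [Nontrivial A] {m q : ℕ} (hm : m ≠ 0) (F : A) (I : Ideal A)
    {b : Fin m → ℕ} (hqb : ∀ i, q ≤ m * b i + i)
    (hb : ∀ (i : Fin m) n, q ≤ n → n % m = i → b i ≤ n / m) (P : A[X]) :
    P ∈ I.map Polynomial.C ⊔
        Ideal.span {Polynomial.X ^ q, Polynomial.X ^ m + Polynomial.C F} ↔
      ∀ i : Fin m, remainderCoeff k (Polynomial.X ^ m + Polynomial.C F) i P ∈
        I ⊔ Ideal.span {F ^ b i} := by
  have hG := Polynomial.monic_X_pow_add_C F hm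
  constructor
  · intro hP i
    rw [Ideal.map, ← Ideal.span_union] at hP
    refine map_mem_of_mem_span ?_ hP
    rintro _ (⟨a, ha, rfl⟩ | rfl | rfl) Q
    · rw [remainderCoeff_mul_C]
      exact Ideal.mul_mem_right _ _ (Ideal.mem_sup_left ha)
    · exact Ideal.mem_sup_right
        (Ideal.mem_span_singleton.2 (pow_dvd_remainderCoeff_mul_X_pow hm F (hb i) Q))
    · rw [remainderCoeff_mul_self hG]
      exact Ideal.zero_mem _
  · intro hP
    set J := I.map Polynomial.C ⊔
      Ideal.span {Polynomial.X ^ q, Polynomial.X ^ m + Polynomial.C F}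
    have hXJ : Polynomial.X ^ q ∈ J := Ideal.mem_sup_right (Ideal.subset_span (by simp))
    have hGJ : Polynomial.X ^ m + Polynomial.C F ∈ J :=
      Ideal.mem_sup_right (Ideal.subset_span (by simp))
    have hdeg : (P %ₘ (Polynomial.X ^ m + Polynomial.C F)).natDegree < m := by
      have hne : Polynomial.X ^ m + Polynomial.C F ≠ 1 := fun h =>
        hm (by simpa [Polynomial.natDegree_X_pow_add_C] using congrArg Polynomial.natDegree h)
      simpa [Polynomial.natDegree_X_pow_add_C] using Polynomial.natDegree_modByMonic_lt P hG hne
    rw [← Polynomial.modByMonic_add_div P (Polynomial.X ^ m + Polynomial.C F),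
      (P %ₘ _).as_sum_range_C_mul_X_pow' hdeg]
    refine J.add_mem (J.sum_mem fun i hi => ?_) (J.mul_mem_right _ hGJ)
    exact C_mul_X_pow_mem le_sup_left hXJ hGJ (hqb ⟨i, Finset.mem_range.1 hi⟩)
      (hP ⟨i, Finset.mem_range.1 hi⟩)

theorem surjective_pi_remainderCoeff [Nontrivial A] {m : ℕ} (hm : m ≠ 0) (F : A) :
    Function.Surjective (LinearMap.pi fun i : Fin m =>
      remainderCoeff k (Polynomial.X ^ m + Polynomial.C F) i) := by
  intro f
  refine ⟨∑ j : Fin m, Polynomial.X ^ (j : ℕ) * Polynomial.C (f j), ?_⟩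
  ext i
  simp [remainderCoeff_mul_C, remainderCoeff_X_pow hm, Nat.mod_eq_of_lt, Nat.div_eq_of_lt,
    Fin.val_inj, -Polynomial.X_pow_mul_C]

theorem finrank_quotient_map_sup_span [Nontrivial A] {m : ℕ} (hm : m ≠ 0) (q : ℕ) (F : A)
    (I : Ideal A) [∀ j, FiniteDimensional k (A ⧸ I ⊔ Ideal.span {F ^ j})] :
    Module.finrank k (A[X] ⧸ I.map Polynomial.C ⊔
        Ideal.span {Polynomial.X ^ q, Polynomial.X ^ m + Polynomial.C F}) =
      ∑ i ∈ Finset.range m, Module.finrank k (A ⧸ I ⊔ Ideal.span {F ^ ((q + i) / m)}) := by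
  have hm' : 0 < m := by lia
  let b (i : Fin m) : ℕ := (q + (m - 1 - i)) / m
  have hqb (i : Fin m) : q ≤ m * b i + i := by
    have := Nat.lt_mul_div_succ (q + (m - 1 - i)) hm'
    lia
  have hb (i : Fin m) (n : ℕ) (hn : q ≤ n) (hi : n % m = i) : b i ≤ n / m := by
    rw [← Nat.lt_add_one_iff, Nat.div_lt_iff_lt_mul hm', add_mul, mul_comm (n / m)]
    have := Nat.mod_add_div n m
    lia
  rw [finrank_quotient_eq_sum (surjective_pi_remainderCoeff hm F)
    (mem_map_sup_span_iff hm F I hqb hb), ← Finset.sum_range_reflect, Finset.sum_range]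

end AddVariable

section ShortBlocks

variable {R : Type*} [CommRing R]

/-- A witness that multiplication by `F` has a short Jordan block: if `m ≠ 0`, then `g'` lies in
the kernel of `F` but not in the image of `F ^ n`, because the latter is annihilated by `g`. So
some Jordan block has length at most `n`. In the applications `m` generates the socle. -/
def HasShortBlock (F : R) (n : ℕ) (m : R) : Prop :=
  ∃ g g', F ^ n * g = 0 ∧ F * g' = 0 ∧ Associated (g * g') m

theorem HasShortBlock.mono {F m : R} {n n' : ℕ} (hF : HasShortBlock F n m) (hn : n ≤ n') :
    HasShortBlock F n' m := by
  obtain ⟨g, g', hg, hg', hm⟩ := hF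
  refine ⟨g, g', ?_, hg', hm⟩
  rw [← Nat.sub_add_cancel hn, pow_add, mul_assoc, hg, mul_zero]

theorem add_pow_mul_of_mul_eq_zero {F G f : R} (hf : G * f = 0) (n : ℕ) :
    (F + G) ^ n * f = F ^ n * f := by
  induction n with
  | zero => simp
  | succ n ih =>
    rw [pow_succ', pow_succ']
    linear_combination (F + G) * ih + F ^ n * hf

theorem HasShortBlock.add {F G m m' : R} {n : ℕ} (hF : HasShortBlock F n m)
    (hG : HasShortBlock G 1 m') : HasShortBlock (F + G) n (m * m') := by
  obtain ⟨g, g', hg, hg', hm⟩ := hF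
  obtain ⟨f, f', hf, hf', hm'⟩ := hG
  rw [pow_one] at hf
  refine ⟨g * f, g' * f', ?_, ?_, ?_⟩
  · linear_combination g * add_pow_mul_of_mul_eq_zero (F := F) hf n + f * hg
  · linear_combination f' * hg' + g' * hf'
  · rw [mul_mul_mul_comm]
    exact hm.mul_mul hm'

/-- The sum `∑ (-x) ^ i * y ^ (n - 1 - i)`, which is the quotient of `y ^ n - (-x) ^ n` by
`x + y`. -/
def altGeomSum (x y : R) (n : ℕ) : R :=
  ∑ i ∈ Finset.range n, (-x) ^ i * y ^ (n - 1 - i)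

theorem altGeomSum_succ (x y : R) (n : ℕ) :
    altGeomSum x y (n + 1) = (-x) ^ n + y * altGeomSum x y n :=
  geom_sum₂_succ_eq (-x) y

theorem altGeomSum_one (x y : R) : altGeomSum x y 1 = 1 := by simp [altGeomSum]

theorem add_mul_altGeomSum (x y : R) (n : ℕ) :
    (x + y) * altGeomSum x y n = y ^ n - (-x) ^ n := by
  rw [altGeomSum]
  linear_combination -geom_sum₂_mul (-x) y n

theorem neg_pow_mul_of_add_mul_eq_zero {x y c : R} (hc : (x + y) * c = 0) (n : ℕ) :
    (-x) ^ n * c = y ^ n * c := by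
  induction n with
  | zero => simp
  | succ n ih => linear_combination (-x) * ih - y ^ n * hc

theorem altGeomSum_mul_of_add_mul_eq_zero {x y c : R} (hc : (x + y) * c = 0) (n : ℕ) :
    altGeomSum x y (n + 1) * c = (n + 1) * y ^ n * c := by
  induction n with
  | zero => simp [altGeomSum_one]
  | succ n ih =>
    rw [altGeomSum_succ]
    push_cast
    linear_combination neg_pow_mul_of_add_mul_eq_zero hc (n + 1) + y * ih

theorem altGeomSum_mul_of_pow_mul_eq_zero {x y c : R} {n : ℕ} (hc : y ^ (n + 1) * c = 0) :
    altGeomSum x y (n + 1) * y ^ n * c = (-1) ^ n * x ^ n * y ^ n * c := by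
  rw [altGeomSum_succ, neg_pow]
  linear_combination altGeomSum x y n * hc

-- At `-x = y` the right-hand side vanishes, so `x + y` divides it; the second clause evaluates the
-- quotient `h` at `-x = y`, up to the factor `2`.
theorem exists_add_mul_eq_altGeomSum (x y : R) (n : ℕ) :
    ∃ h : R, (x + y) * h = -x * altGeomSum x y (n + 1) - (n + 1) * y ^ (n + 1) ∧
      ∀ c : R, (x + y) * c = 0 → 2 * h * c = -((n + 1) * (n + 2)) * y ^ n * c := by
  induction n with
  | zero => exact ⟨-1, by rw [altGeomSum_one, Nat.cast_zero]; ring, by simp⟩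
  | succ n ih =>
    obtain ⟨h, hh, hann⟩ := ih
    refine ⟨y * (h - altGeomSum x y (n + 1)) - (-x) ^ (n + 1), ?_, fun c hc => ?_⟩
    · rw [altGeomSum_succ x y (n + 1)]
      push_cast
      linear_combination y * hh - y * add_mul_altGeomSum x y (n + 1)
    · have hpow := neg_pow_mul_of_add_mul_eq_zero hc (n + 1)
      have hsum := altGeomSum_mul_of_add_mul_eq_zero hc n
      push_cast
      linear_combination y * hann c hc - 2 * y * hsum - 2 * hpow

theorem hasShortBlock_sq_add_sq {x y : R} {n : ℕ} (hx : x ^ (2 * n + 3) = 0)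
    (hy : y ^ (2 * n + 3) = 0) (hn : IsUnit (n + 1 : R)) :
    HasShortBlock (x ^ 2 + y ^ 2) 1 (x ^ (2 * n + 2) * y ^ (2 * n + 2)) := by
  set S := altGeomSum (x ^ 2) (y ^ 2) (n + 1)
  have hker : (x ^ 2 + y ^ 2) * (x * y * S) = 0 := by
    have hmul := add_mul_altGeomSum (x ^ 2) (y ^ 2) (n + 1)
    rw [neg_pow] at hmul
    linear_combination x * y * hmul + x * hy - (-1) ^ (n + 1) * y * hx
  have hsq : x * y * S * (x * y * S) =
      (-1) ^ n * (n + 1) * (x ^ (2 * n + 2) * y ^ (2 * n + 2)) := by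
    have htop := altGeomSum_mul_of_pow_mul_eq_zero (x := x ^ 2) (y := y ^ 2) (n := n)
      (c := x ^ 2 * y ^ 2) (by linear_combination x ^ 2 * y * hy)
    linear_combination x * y * altGeomSum_mul_of_add_mul_eq_zero hker n + (n + 1) * htop
  refine ⟨x * y * S, x * y * S, by rwa [pow_one], hker, ?_⟩
  rw [hsq]
  exact associated_unit_mul_left _ _ ((isUnit_one.neg.pow n).mul hn)

-- The tensor product of the block of length `2` of `s` generated by `v` with the block of length
-- `n + 2` of `t` generated by `w` contains a block of length `n + 1` of `s + t`.
theorem hasShortBlock_add_of_mul_mul_eq_zero {s t v w : R} {n : ℕ} (hv : s * (s * v) = 0)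
    (hw : t ^ (n + 2) * w = 0) :
    HasShortBlock (s + t) (n + 1) ((n + 2) * (s * v * v) * (t ^ (n + 1) * w ^ 2)) := by
  have hpow (i : ℕ) : (s + t) ^ (i + 1) * v = t ^ (i + 1) * v + (i + 1) * t ^ i * (s * v) := by
    induction i with
    | zero => push_cast; ring
    | succ i ih =>
      rw [pow_succ']
      push_cast
      linear_combination (s + t) * ih + (i + 1) * t ^ i * hv
  have hpow' := add_pow_mul_of_mul_eq_zero (F := t) hv (n + 1)
  refine ⟨w * (t * v - (n + 1) * (s * v)), w * (t ^ (n + 1) * v - t ^ n * (s * v)), ?_, ?_, ?_⟩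
  · linear_combination w * t * hpow n - w * (n + 1) * hpow' + v * hw
  · linear_combination v * hw - w * t ^ n * hv
  · have hprod : w * (t * v - (n + 1) * (s * v)) * (w * (t ^ (n + 1) * v - t ^ n * (s * v))) =
        -((n + 2) * (s * v * v) * (t ^ (n + 1) * w ^ 2)) := by
      linear_combination v ^ 2 * w * hw + (n + 1) * t ^ n * w ^ 2 * v * hv
    rw [hprod]
    exact (Associated.refl _).neg_left

theorem exists_two_block_sq_add_sq {x y : R} {n : ℕ} (hx : x ^ (2 * n + 3) = 0)
    (hy : y ^ (2 * n + 3) = 0) (hn₁ : IsUnit (n + 1 : R)) (hn₂ : IsUnit (n + 2 : R))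
    (h2 : IsUnit (2 : R)) :
    ∃ v, (x ^ 2 + y ^ 2) * ((x ^ 2 + y ^ 2) * v) = 0 ∧
      Associated ((x ^ 2 + y ^ 2) * v * v) (x ^ (2 * n + 2) * y ^ (2 * n + 2)) := by
  obtain ⟨h, hh, hann⟩ := exists_add_mul_eq_altGeomSum (x ^ 2) (y ^ 2) n
  set S := altGeomSum (x ^ 2) (y ^ 2) (n + 1)
  have hu : (x ^ 2 + y ^ 2) * (y * h) = -(x ^ 2 * y * S) := by
    linear_combination y * hh - (n + 1) * hy
  have hker : (x ^ 2 + y ^ 2) * (x ^ 2 * y * S) = 0 := by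
    have hmul := add_mul_altGeomSum (x ^ 2) (y ^ 2) (n + 1)
    rw [neg_pow] at hmul
    linear_combination x ^ 2 * y * hmul + x ^ 2 * hy - (-1) ^ (n + 1) * x * y * hx
  have hprod : 2 * ((x ^ 2 + y ^ 2) * (y * h) * (y * h)) =
      (-1) ^ n * (n + 1) * (n + 2) * (x ^ (2 * n + 2) * y ^ (2 * n + 2)) := by
    have htop := altGeomSum_mul_of_pow_mul_eq_zero (x := x ^ 2) (y := y ^ 2) (n := n)
      (c := x ^ 2 * y ^ 2) (by linear_combination x ^ 2 * y * hy)
    linear_combination 2 * y * h * hu - y * hann _ hker + (n + 1) * (n + 2) * htop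
  refine ⟨y * h, by rw [hu, mul_neg, hker, neg_zero], ?_⟩
  refine (associated_unit_mul_left _ _ h2).symm.trans ?_
  rw [hprod]
  exact associated_unit_mul_left _ _ (((isUnit_one.neg.pow n).mul hn₁).mul hn₂)

theorem hasShortBlock_sq_add_sq_add_sq {x y z : R} {n : ℕ} (hx : x ^ (2 * n + 5) = 0)
    (hy : y ^ (2 * n + 5) = 0) (hz : z ^ (2 * n + 5) = 0) (hn₂ : IsUnit (n + 2 : R))
    (hn₃ : IsUnit (n + 3 : R)) (h2 : IsUnit (2 : R)) :
    HasShortBlock (x ^ 2 + y ^ 2 + z ^ 2) (n + 1)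
      (x ^ (2 * n + 4) * y ^ (2 * n + 4) * z ^ (2 * n + 4)) := by
  obtain ⟨v, hv, hvv⟩ := exists_two_block_sq_add_sq (n := n + 1) hx hy
    (by convert hn₂ using 1; push_cast; ring) (by convert hn₃ using 1; push_cast; ring) h2
  obtain ⟨g, g', hg, hg', hgg'⟩ := hasShortBlock_add_of_mul_mul_eq_zero (t := z ^ 2) (w := z)
    (n := n) hv (by linear_combination hz)
  refine ⟨g, g', hg, hg', hgg'.trans ?_⟩
  rw [mul_assoc, show (z ^ 2) ^ (n + 1) * z ^ 2 = z ^ (2 * n + 4) by ring]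
  exact (associated_unit_mul_left _ _ hn₂).trans (hvv.mul_right _)

theorem hasShortBlock_sum_sq {n : ℕ} (hn₂ : IsUnit (n + 2 : R)) (hn₃ : IsUnit (n + 3 : R))
    (h2 : IsUnit (2 : R)) (d : ℕ) (x : Fin (d + 2) → R) (hx : ∀ i, x i ^ (2 * n + 5) = 0) :
    HasShortBlock (∑ i, x i ^ 2) (n + 1) (∏ i, x i ^ (2 * n + 4)) := by
  have hpair {y z : R} (hy : y ^ (2 * n + 5) = 0) (hz : z ^ (2 * n + 5) = 0) :=
    hasShortBlock_sq_add_sq (n := n + 1) hy hz (by convert hn₂ using 1; push_cast; ring)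
  induction d using Nat.twoStepInduction with
  | zero =>
    rw [Fin.sum_univ_two, Fin.prod_univ_two]
    exact (hpair (hx 0) (hx 1)).mono (by lia)
  | one =>
    rw [Fin.sum_univ_three, Fin.prod_univ_three]
    exact hasShortBlock_sq_add_sq_add_sq (hx 0) (hx 1) (hx 2) hn₂ hn₃ h2
  | more d ih _ =>
    simp only [Fin.sum_univ_castSucc (n := d + 3), Fin.sum_univ_castSucc (n := d + 2),
      Fin.prod_univ_castSucc (n := d + 3), Fin.prod_univ_castSucc (n := d + 2)]
    rw [add_assoc, mul_assoc]
    exact (ih _ fun i => hx _).add (hpair (hx _) (hx _))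

end ShortBlocks

section VarPowIdeal

variable {k σ : Type*} [Field k] {q : ℕ}

variable (k σ) in
/-- The ideal generated by the `q`-th powers of the variables. For `q = p ^ e` in characteristic
`p` it is the `e`-th Frobenius power of the ideal generated by the variables. -/
noncomputable def varPowIdeal (q : ℕ) : Ideal (MvPolynomial σ k) :=
  Ideal.span (Set.range fun i => X i ^ q)

theorem X_pow_mem_varPowIdeal (i : σ) : X i ^ q ∈ varPowIdeal k σ q :=
  Ideal.subset_span ⟨i, rfl⟩

theorem map_varPowIdeal {S G : Type*} [CommSemiring S] [FunLike G (MvPolynomial σ k) S]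
    [RingHomClass G (MvPolynomial σ k) S] (φ : G) :
    (varPowIdeal k σ q).map φ = Ideal.span (Set.range fun i => φ (X i) ^ q) := by
  rw [varPowIdeal, Ideal.map_span, ← Set.range_comp]
  simp only [Function.comp_def, map_pow]

theorem finiteDimensional_quotient_of_varPowIdeal_le [Finite σ] (hq : 0 < q)
    {I : Ideal (MvPolynomial σ k)} (hI : varPowIdeal k σ q ≤ I) :
    FiniteDimensional k (MvPolynomial σ k ⧸ I) := by
  have : Algebra.IsIntegral k (MvPolynomial σ k ⧸ I) := by
    refine ⟨fun x => ?_⟩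
    obtain ⟨P, rfl⟩ := Ideal.Quotient.mk_surjective x
    induction P using MvPolynomial.induction_on with
    | C a => exact isIntegral_algebraMap (x := a)
    | add P Q hP hQ =>
      rw [map_add]
      exact hP.add hQ
    | mul_X P i hP =>
      rw [map_mul]
      refine hP.mul (IsIntegral.of_pow hq ?_)
      rw [← map_pow, Ideal.Quotient.eq_zero_iff_mem.2 (hI (X_pow_mem_varPowIdeal i))]
      exact isIntegral_zero
  exact Algebra.IsIntegral.finite

theorem prod_X_pow_notMem_varPowIdeal [Fintype σ] :
    ∏ i : σ, X i ^ q ∉ varPowIdeal k σ (q + 1) := by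
  classical
  set t : σ →₀ ℕ := Finsupp.equivFunOnFinite.symm fun _ => q with ht
  have hprod : ∏ i : σ, (X i : MvPolynomial σ k) ^ q = monomial t 1 := by
    rw [monomial_eq, Finsupp.prod_fintype _ _ (by simp)]
    simp [ht]
  have hspan : varPowIdeal k σ (q + 1) =
      Ideal.span ((fun s => monomial s 1) '' Set.range fun i => Finsupp.single i (q + 1)) := by
    rw [← Set.range_comp]
    simp only [varPowIdeal, X_pow_eq_monomial, Function.comp_def]
  rw [hprod, hspan, mem_ideal_span_monomial_image]
  intro hmem
  obtain ⟨_, ⟨i, rfl⟩, hle⟩ := hmem t (by rw [mem_support_iff, coeff_monomial]; simp)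
  simpa [ht] using hle i

end VarPowIdeal

section HilbertKunzFunction

variable {k : Type*} [Field k] {n p e : ℕ}

theorem HKfun_eq_finrank_sup (p e : ℕ) (f : MvPolynomial (Fin n) k) :
    HKfun k n p e f =
      Module.finrank k
        (MvPolynomial (Fin n) k ⧸ varPowIdeal k (Fin n) (p ^ e) ⊔ Ideal.span {f}) := by
  rw [HKfun, Ideal.span_union, varPowIdeal]

theorem HKfun_pow_eq_finrank (p e : ℕ) (F : MvPolynomial (Fin n) k) (j : ℕ) :
    HKfun k n p e (F ^ j) = Module.finrank k
      ((MvPolynomial (Fin n) k ⧸ varPowIdeal k (Fin n) (p ^ e)) ⧸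
        Ideal.span {Ideal.Quotient.mk (varPowIdeal k (Fin n) (p ^ e)) F ^ j}) := by
  have hspan : Ideal.span {Ideal.Quotient.mk (varPowIdeal k (Fin n) (p ^ e)) F ^ j} =
      (Ideal.span {F ^ j}).map (Ideal.Quotient.mkₐ k (varPowIdeal k (Fin n) (p ^ e))) := by
    rw [Ideal.map_span, Set.image_singleton, map_pow, Ideal.Quotient.mkₐ_eq_mk]
  rw [HKfun_eq_finrank_sup, hspan]
  exact (DoubleQuot.quotQuotEquivQuotSupₐ k _ _).symm.toLinearEquiv.finrank_eq

theorem HKfun_le_HKfun_zero (hp : 0 < p) (f : MvPolynomial (Fin n) k) :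
    HKfun k n p e f ≤ HKfun k n p e 0 := by
  have := finiteDimensional_quotient_of_varPowIdeal_le (k := k) (σ := Fin n)
    (I := varPowIdeal k (Fin n) (p ^ e) ⊔ Ideal.span {0}) (pow_pos hp e) le_sup_left
  have hle : varPowIdeal k (Fin n) (p ^ e) ⊔ Ideal.span {0} ≤
      varPowIdeal k (Fin n) (p ^ e) ⊔ Ideal.span {f} := by simp
  rw [HKfun_eq_finrank_sup, HKfun_eq_finrank_sup]
  exact LinearMap.finrank_le_finrank_of_surjective
    (f := (Ideal.Quotient.factorₐ k hle).toLinearMap) (Ideal.Quotient.factor_surjective hle)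

theorem HKfun_expand (hp : 0 < p) (f : MvPolynomial (Fin n) k) :
    HKfun k n p (e + 1) (expand p f) = p ^ n * HKfun k n p e f := by
  have := finiteDimensional_quotient_of_varPowIdeal_le (k := k) (σ := Fin n)
    (I := varPowIdeal k (Fin n) (p ^ e) ⊔ Ideal.span {f}) (pow_pos hp e) le_sup_left
  have hmap : (varPowIdeal k (Fin n) (p ^ e) ⊔ Ideal.span {f}).map
        (expand (R := k) (σ := Fin n) p) =
      varPowIdeal k (Fin n) (p ^ (e + 1)) ⊔ Ideal.span {expand p f} := by
    have hpow : (varPowIdeal k (Fin n) (p ^ e)).map (expand (R := k) (σ := Fin n) p) =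
        varPowIdeal k (Fin n) (p ^ (e + 1)) := by
      rw [map_varPowIdeal]
      simp [varPowIdeal, ← pow_mul, ← pow_succ']
    rw [Ideal.map_sup, hpow, Ideal.map_span, Set.image_singleton]
  rw [HKfun_eq_finrank_sup, HKfun_eq_finrank_sup, ← hmap, finrank_quotient_map_expand hp,
    Fintype.card_fin]

theorem HKfun_zero (hp : 0 < p) (e : ℕ) :
    HKfun k n p e 0 = HKfun k n p 0 0 * p ^ (n * e) := by
  induction e with
  | zero => simp
  | succ e ih =>
    have hstep := HKfun_expand (e := e) hp (0 : MvPolynomial (Fin n) k)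
    rw [map_zero, ih] at hstep
    rw [hstep]
    ring

theorem antitone_HKfun_pow_sub (hp : 0 < p) (e : ℕ) (F : MvPolynomial (Fin n) k) :
    Antitone fun j => (HKfun k n p e (F ^ (j + 1)) - HKfun k n p e (F ^ j) : ℝ) := by
  have := finiteDimensional_quotient_of_varPowIdeal_le (k := k) (σ := Fin n) (pow_pos hp e) le_rfl
  have hsub (j : ℕ) : (HKfun k n p e (F ^ (j + 1)) - HKfun k n p e (F ^ j) : ℝ) =
      numBlocksGT k (Ideal.Quotient.mk (varPowIdeal k (Fin n) (p ^ e)) F) j := by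
    rw [HKfun_pow_eq_finrank, HKfun_pow_eq_finrank, finrank_quotient_span_pow_succ]
    push_cast
    ring
  simp only [hsub]
  exact Nat.mono_cast.comp_antitone (antitone_numBlocksGT _)

variable (k n) in
/-- The polynomial ring in `n + 1` variables as a univariate polynomial ring in the last one. -/
noncomputable def polynomialLastEquiv :
    MvPolynomial (Fin (n + 1)) k ≃ₐ[k] Polynomial (MvPolynomial (Fin n) k) :=
  (renameEquiv k finSuccEquivLast).trans (optionEquivLeft k (Fin n))

theorem polynomialLastEquiv_X_last :
    polynomialLastEquiv k n (X (Fin.last n)) = Polynomial.X := by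
  simp [polynomialLastEquiv]

theorem polynomialLastEquiv_X_castSucc (i : Fin n) :
    polynomialLastEquiv k n (X i.castSucc) = Polynomial.C (X i) := by
  simp [polynomialLastEquiv]

theorem polynomialLastEquiv_rename_castSucc (P : MvPolynomial (Fin n) k) :
    polynomialLastEquiv k n (rename Fin.castSucc P) = Polynomial.C P := by
  induction P using MvPolynomial.induction_on with
  | C a => simp [polynomialLastEquiv]
  | add P Q hP hQ => simp only [map_add, hP, hQ]
  | mul_X P i hP => rw [map_mul, map_mul, map_mul, hP, rename_X, polynomialLastEquiv_X_castSucc]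

theorem map_polynomialLastEquiv_varPowIdeal (q : ℕ) :
    (varPowIdeal k (Fin (n + 1)) q).map
        (polynomialLastEquiv k n : _ →+* Polynomial (MvPolynomial (Fin n) k)) =
      (varPowIdeal k (Fin n) q).map Polynomial.C ⊔ Ideal.span {Polynomial.X ^ q} := by
  rw [map_varPowIdeal, map_varPowIdeal, ← Ideal.span_union]
  congr 1
  ext P
  simp [Fin.exists_fin_succ', polynomialLastEquiv_X_last, polynomialLastEquiv_X_castSucc, eq_comm,
    or_comm]

theorem HKfun_rename_add_X_last_pow (hp : 0 < p) (e : ℕ) {m : ℕ} (hm : m ≠ 0)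
    (F : MvPolynomial (Fin n) k) :
    HKfun k (n + 1) p e (rename Fin.castSucc F + X (Fin.last n) ^ m) =
      ∑ i ∈ Finset.range m, HKfun k n p e (F ^ ((p ^ e + i) / m)) := by
  have (j : ℕ) := finiteDimensional_quotient_of_varPowIdeal_le (k := k) (σ := Fin n)
    (I := varPowIdeal k (Fin n) (p ^ e) ⊔ Ideal.span {F ^ j}) (pow_pos hp e) le_sup_left
  simp only [HKfun_eq_finrank_sup]
  rw [← finrank_quotient_map_sup_span hm]
  refine (Ideal.quotientEquivAlg _ _ (polynomialLastEquiv k n) ?_).toLinearEquiv.finrank_eq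
  have hgen : polynomialLastEquiv k n (rename Fin.castSucc F + X (Fin.last n) ^ m) =
      Polynomial.X ^ m + Polynomial.C F := by
    rw [map_add, map_pow, polynomialLastEquiv_rename_castSucc, polynomialLastEquiv_X_last,
      add_comm]
  rw [Ideal.map_sup, map_polynomialLastEquiv_varPowIdeal, Ideal.map_span, Set.image_singleton,
    sup_assoc, ← Ideal.span_union, Set.singleton_union, RingHom.coe_coe, hgen]

end HilbertKunzFunction

section SumOfSquares

variable {k : Type*} [Field k]

variable (k) in
/-- The sum of the squares of `d` variables. -/
noncomputable def sumSq (d : ℕ) : MvPolynomial (Fin d) k := ∑ i, X i ^ 2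

theorem rename_castSucc_sumSq (d : ℕ) :
    rename Fin.castSucc (sumSq k d) = ∑ i : Fin d, X i.castSucc ^ 2 := by
  simp [sumSq]

theorem expand_sumSq_pow {p : ℕ} (hp : p.Prime) [CharP k p] (d j : ℕ) :
    expand p (sumSq k d ^ j) = sumSq k d ^ (p * j) := by
  have : Fact p.Prime := ⟨hp⟩
  rw [pow_mul, map_pow, sumSq, sum_pow_char]
  simp [← pow_mul, mul_comm]

theorem isUnit_natCast_of_lt {p c : ℕ} (hp : p.Prime) [CharP k p] {A : Type*} [CommRing A]
    [Algebra k A] (hc : 0 < c) (hcp : c < p) : IsUnit (c : A) := by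
  have hk : IsUnit (c : k) := (CharP.isUnit_natCast_iff hp).2 (Nat.not_dvd_of_pos_of_lt hc hcp)
  simpa using hk.map (algebraMap k A)

theorem hasShortBlock_mk_sumSq {n : ℕ} (hp : (2 * n + 5).Prime) [CharP k (2 * n + 5)] (d : ℕ) :
    HasShortBlock (Ideal.Quotient.mk (varPowIdeal k (Fin (d + 2)) (2 * n + 5)) (sumSq k (d + 2)))
      (n + 1) (Ideal.Quotient.mk _ (∏ i, X i ^ (2 * n + 4))) := by
  have hunit (c : ℕ) (hc : 0 < c) (hcp : c < 2 * n + 5) :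
      IsUnit (c : MvPolynomial (Fin (d + 2)) k ⧸ varPowIdeal k (Fin (d + 2)) (2 * n + 5)) :=
    isUnit_natCast_of_lt (k := k) hp hc hcp
  simp only [sumSq, map_sum, map_prod, map_pow]
  refine hasShortBlock_sum_sq (by exact_mod_cast hunit (n + 2) (by lia) (by lia))
    (by exact_mod_cast hunit (n + 3) (by lia) (by lia))
    (by exact_mod_cast hunit 2 (by lia) (by lia)) d _ fun i => ?_
  rw [← map_pow, Ideal.Quotient.eq_zero_iff_mem]
  exact X_pow_mem_varPowIdeal i

theorem HKfun_sumSq_pow_lt {n : ℕ} (hp : (2 * n + 5).Prime) [CharP k (2 * n + 5)] (d : ℕ) :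
    HKfun k (d + 2) (2 * n + 5) 1 (sumSq k (d + 2) ^ (n + 2)) <
      (n + 2) * HKfun k (d + 2) (2 * n + 5) 1 (sumSq k (d + 2) ^ 1) := by
  have := finiteDimensional_quotient_of_varPowIdeal_le (k := k) (σ := Fin (d + 2)) hp.pos le_rfl
  obtain ⟨g, g', hg, hg', hgg'⟩ := hasShortBlock_mk_sumSq (k := k) hp d
  have hne : g * g' ≠ 0 := by
    rw [hgg'.ne_zero_iff, Ne, Ideal.Quotient.eq_zero_iff_mem]
    exact prod_X_pow_notMem_varPowIdeal
  rw [HKfun_pow_eq_finrank, HKfun_pow_eq_finrank, pow_one (2 * n + 5)]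
  exact finrank_quotient_span_pow_lt hg hg' hne

end SumOfSquares

section HilbertKunzMultiplicity

open Filter Topology

variable {k : Type*} [Field k] {p d : ℕ}

variable (k p d) in
/-- The normalized Hilbert–Kunz function of the `A_{m - 1}` singularity in dimension `d`, whose
limit is the Hilbert–Kunz multiplicity. -/
noncomputable def HKratio (m e : ℕ) : ℝ :=
  HKfun k (d + 1) p e (∑ i : Fin d, X i.castSucc ^ 2 + X (Fin.last d) ^ m) / (p : ℝ) ^ (d * e)

theorem HKratio_eq_evenSum_div (hp : 0 < p) {m : ℕ} (hm : 0 < m) (e : ℕ) :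
    HKratio k p d m e =
      evenSum (fun j => HKfun k d p e (sumSq k d ^ j)) m (p ^ e) / (p : ℝ) ^ (d * e) := by
  rw [HKratio, ← rename_castSucc_sumSq, HKfun_rename_add_X_last_pow hp e hm.ne', Nat.cast_sum,
    evenSum]

theorem HKratio_le_HKratio (hp : 0 < p) {m n : ℕ} (hm : 0 < m) (hmn : m ≤ n) (e : ℕ) :
    HKratio k p d m e ≤ HKratio k p d n e := by
  rw [HKratio_eq_evenSum_div hp hm, HKratio_eq_evenSum_div hp (hm.trans_le hmn)]
  exact div_le_div_of_nonneg_right (evenSum_le_evenSum_of_le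
    (D := fun j => (HKfun k d p e (sumSq k d ^ j) : ℝ)) (antitone_HKfun_pow_sub hp e _)
    (Nat.cast_nonneg _) hm hmn _) (by positivity)

variable [CharP k p]

theorem HKfun_sumSq_pow_mul (hp : p.Prime) (e j : ℕ) :
    (HKfun k d p (e + 1) (sumSq k d ^ (p * j)) : ℝ) =
      (p : ℝ) ^ d * HKfun k d p e (sumSq k d ^ j) := by
  rw [← expand_sumSq_pow hp, HKfun_expand hp.pos]
  push_cast
  rfl

variable (k d) in
theorem exists_tendsto_HKratio (hp : p.Prime) {m : ℕ} (hm : 0 < m) :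
    ∃ L, Tendsto (HKratio k p d m) atTop (𝓝 L) := by
  simp only [funext (HKratio_eq_evenSum_div (k := k) (d := d) hp.pos hm)]
  refine exists_tendsto_evenSum_div_pow (fun e => antitone_HKfun_pow_sub hp.pos e _)
    (HKfun_sumSq_pow_mul hp) hp.pos hm (C := HKfun k d p 0 0) fun e j => ?_
  exact_mod_cast (HKfun_le_HKfun_zero hp.pos _).trans_eq (HKfun_zero hp.pos e)

theorem lt_of_tendsto_HKratio (hp : p.Prime) (hp3 : 3 < p) (hd : 2 ≤ d) {L M : ℝ}
    (hL : Tendsto (HKratio k p d 2) atTop (𝓝 L)) (hM : Tendsto (HKratio k p d 3) atTop (𝓝 M)) :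
    L < M := by
  obtain ⟨n, rfl⟩ : ∃ n, p = 2 * n + 5 := by
    obtain ⟨a, rfl⟩ := hp.odd_of_ne_two (by lia)
    exact ⟨a - 2, by lia⟩
  obtain ⟨d, rfl⟩ := Nat.exists_eq_add_of_le' hd
  rw [funext (HKratio_eq_evenSum_div hp.pos two_pos)] at hL
  rw [funext (HKratio_eq_evenSum_div hp.pos three_pos)] at hM
  exact lt_of_tendsto_evenSum_div_pow (fun e => antitone_HKfun_pow_sub hp.pos e _)
    (HKfun_sumSq_pow_mul hp) (a := n + 2) two_pos (by lia) (by lia) (by lia) (by lia) (by lia)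
    (by exact_mod_cast HKfun_sumSq_pow_lt hp d) hL hM

end HilbertKunzMultiplicity

theorem eHK_A2_gt_A1_large_char_general (p : ℕ) (hp : p.Prime) (hp3 : 3 < p)
    (k : Type*) [Field k] [CharP k p] (d : ℕ) (hd : 2 ≤ d) (m : ℕ) (hm : 3 ≤ m) :
    ∃ L_R L_S : ℝ,
      Filter.Tendsto
        (fun e : ℕ =>
          (HKfun k (d + 1) p e (∑ i : Fin (d + 1), X i ^ 2) : ℝ) / (p : ℝ) ^ (d * e))
        Filter.atTop (nhds L_R) ∧
      Filter.Tendsto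
        (fun e : ℕ =>
          (HKfun k (d + 1) p e
              ((∑ i : Fin d, (X (i.castSucc) : MvPolynomial (Fin (d + 1)) k) ^ 2) +
                X (Fin.last d) ^ m) : ℝ) / (p : ℝ) ^ (d * e))
        Filter.atTop (nhds L_S) ∧
      L_S > L_R := by
  obtain ⟨L₂, hL₂⟩ := exists_tendsto_HKratio k d hp two_pos
  obtain ⟨L₃, hL₃⟩ := exists_tendsto_HKratio k d hp three_pos
  obtain ⟨L, hL⟩ := exists_tendsto_HKratio k d hp (three_pos.trans_le hm)
  have hlt : L₂ < L₃ := lt_of_tendsto_HKratio hp hp3 hd hL₂ hL₃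
  have hle : L₃ ≤ L := le_of_tendsto_of_tendsto' hL₃ hL (HKratio_le_HKratio hp.pos three_pos hm)
  refine ⟨L₂, L, ?_, hL, hlt.trans_le hle⟩
  simp only [Fin.sum_univ_castSucc]
  exact hL₂

/-- For every prime `p > 3` and `d ≥ 2`, the Hilbert–Kunz multiplicities of the `A₁`
singularity (defined by `x_0² + ⋯ + x_d²`) and of the `A₂` singularity
(defined by `x_0² + ⋯ + x_{d−1}² + x_d³`) exist, and `e_HK(S_{p,d}) > e_HK(R_{p,d})`. -/
theorem eHK_A2_gt_A1_large_char (p : ℕ) (hp : p.Prime) (hp3 : 3 < p)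
    (k : Type*) [Field k] [CharP k p] (d : ℕ) (hd : 2 ≤ d) :
    ∃ L_R L_S : ℝ,
      Filter.Tendsto
        (fun e : ℕ =>
          (HKfun k (d + 1) p e (∑ i : Fin (d + 1), X i ^ 2) : ℝ) / (p : ℝ) ^ (d * e))
        Filter.atTop (nhds L_R) ∧
      Filter.Tendsto
        (fun e : ℕ =>
          (HKfun k (d + 1) p e
              ((∑ i : Fin d, (X (i.castSucc) : MvPolynomial (Fin (d + 1)) k) ^ 2) +
                X (Fin.last d) ^ 3) : ℝ) / (p : ℝ) ^ (d * e))
        Filter.atTop (nhds L_S) ∧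
      L_S > L_R := by
  exact eHK_A2_gt_A1_large_char_general p hp hp3 k d hd 3 le_rfl
end

section
/- Let p > 3 be a prime, let k be a field of characteristic p, and let d ≥ 2. Then p · dim_k( k[y_0,…,y_{d−1}]/(y_0^p,…,y_{d−1}^p, y_0² + ⋯ + y_{d−1}²) ) ≥ dim_k( k[x_0,…,x_d]/(x_0^p,…,x_d^p, x_0² + ⋯ + x_{d−1}² + x_d³) ). That is, p·HK_1(R_{p,d−1}) ≥ HK_1(S_{p,d}). -/
open MvPolynomial

/-!
Write `q = p ^ e`, and let `t` be the class of the last variable in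
`Q = k[x₀, …, x_d] / (x₀ ^ q, …, x_d ^ q, f)`. Since `t ^ q = 0`, the kernels of the powers of
multiplication by `t` exhaust `Q` after `q` steps, each of which adds at most
`dim ker t = dim Q / (t)`. Hence `dim Q ≤ q * dim Q / (t)`, and `Q / (t)` is the quotient ring
computing the Hilbert–Kunz function of the hyperplane section of `f` by `x_d = 0`. This hyperplane
section of the `A₂` singularity in dimension `d` is the `A₁` singularity in dimension `d - 1`.
-/

open Module

section Nilpotent

variable {k : Type*}

lemma finrank_ker_comp_le {U V W : Type*} [DivisionRing k] [AddCommGroup U] [Module k U]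
    [FiniteDimensional k U] [AddCommGroup V] [Module k V] [FiniteDimensional k V] [AddCommGroup W]
    [Module k W] (g : V →ₗ[k] W) (f : U →ₗ[k] V) :
    finrank k (g ∘ₗ f).ker ≤ finrank k g.ker + finrank k f.ker := by
  let fKer : (g ∘ₗ f).ker →ₗ[k] V := f.domRestrict (g ∘ₗ f).ker
  have range_le : fKer.range ≤ g.ker := by
    rintro _ ⟨x, rfl⟩
    exact x.2
  have ker_le : finrank k fKer.ker ≤ finrank k f.ker := by
    rw [LinearMap.ker_domRestrict, ← Submodule.finrank_map_subtype_eq]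
    exact Submodule.finrank_mono (Submodule.map_comap_le _ _)
  rw [← fKer.finrank_range_add_finrank_ker]
  exact add_le_add (Submodule.finrank_mono range_le) ker_le

lemma finrank_ker_pow_le {V : Type*} [DivisionRing k] [AddCommGroup V] [Module k V]
    [FiniteDimensional k V] (T : End k V) (n : ℕ) :
    finrank k (T ^ n).ker ≤ n * finrank k T.ker := by
  induction n with
  | zero => simp [End.one_eq_id]
  | succ n ih =>
    calc finrank k (T ^ (n + 1)).ker
      _ ≤ finrank k (T ^ n).ker + finrank k T.ker := finrank_ker_comp_le (T ^ n) T
      _ ≤ (n + 1) * finrank k T.ker := by rw [add_one_mul]; gcongr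

lemma finrank_ker_mulLeft {A : Type*} [Field k] [CommRing A] [Algebra k A] [FiniteDimensional k A]
    (t : A) : finrank k (LinearMap.mulLeft k t).ker = finrank k (A ⧸ Ideal.span {t}) := by
  have ker_eq_coker : finrank k (LinearMap.mulLeft k t).ker =
      finrank k (A ⧸ (LinearMap.mulLeft k t).range) := by
    have := (LinearMap.mulLeft k t).index_eq_finrank_sub
    rw [LinearMap.index_eq_of_finiteDimensional] at this
    omega
  have range_eq : (LinearMap.mulLeft k t).range = (Ideal.span {t}).restrictScalars k := by
    ext x
    simp [Ideal.mem_span_singleton', mul_comm]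
  rw [ker_eq_coker, range_eq]
  exact (Submodule.Quotient.restrictScalarsEquiv k (Ideal.span {t})).finrank_eq

lemma finrank_le_mul_finrank_quotient_span_of_pow_eq_zero {A : Type*} [Field k] [CommRing A]
    [Algebra k A] {t : A} {n : ℕ} (ht : t ^ n = 0) :
    finrank k A ≤ n * finrank k (A ⧸ Ideal.span {t}) := by
  by_cases hA : FiniteDimensional k A
  · calc finrank k A
      _ = finrank k (LinearMap.mulLeft k t ^ n).ker := by
        rw [LinearMap.pow_mulLeft, ht, LinearMap.mulLeft_zero_eq_zero, LinearMap.ker_zero,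
          finrank_top]
      _ ≤ n * finrank k (LinearMap.mulLeft k t).ker := finrank_ker_pow_le _ n
      _ = n * finrank k (A ⧸ Ideal.span {t}) := by rw [finrank_ker_mulLeft]
  · simp [finrank_of_not_finite hA]

end Nilpotent

lemma finrank_quotient_quotient_span_mk_eq {k A B : Type*} [CommRing k] [CommRing A] [Algebra k A]
    [CommRing B] [Algebra k B] {φ : A →ₐ[k] B} (hφ : Function.Surjective φ) {x : A}
    (hx : RingHom.ker φ = Ideal.span {x}) (I : Ideal A) :
    finrank k ((A ⧸ I) ⧸ Ideal.span {Ideal.Quotient.mk I x}) = finrank k (B ⧸ I.map φ) := by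
  let ψ : A →ₐ[k] B ⧸ I.map φ := (Ideal.Quotient.mkₐ k (I.map φ)).comp φ
  have ψ_surjective : Function.Surjective ψ := (Ideal.Quotient.mkₐ_surjective k _).comp hφ
  have ker_ψ : RingHom.ker ψ = I ⊔ Ideal.span {x} := by
    rw [← hx, ← Ideal.comap_map_of_surjective' φ hφ I]
    ext a
    simp [ψ, Ideal.Quotient.eq_zero_iff_mem]
  have span_mk : Ideal.span {Ideal.Quotient.mk I x} =
      (Ideal.span {x}).map (Ideal.Quotient.mkₐ k I) := by
    simp [Ideal.map_span]
  rw [span_mk, (DoubleQuot.quotQuotEquivQuotSupₐ k I (Ideal.span {x})).toLinearEquiv.finrank_eq,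
    ← ker_ψ]
  exact (Ideal.quotientKerAlgEquivOfSurjective ψ_surjective).toLinearEquiv.finrank_eq

section KillCompl

variable {R σ τ : Type*} {g : σ → τ} (hg : Function.Injective g)

section CommSemiring

variable [CommSemiring R]

lemma killCompl_X_apply (i : σ) : killCompl hg (X (g i) : MvPolynomial τ R) = X i := by
  rw [← rename_X, killCompl_rename_app]

lemma killCompl_X_of_notMem_range {j : τ} (hj : j ∉ Set.range g) :
    killCompl hg (X j : MvPolynomial τ R) = 0 := by
  rw [killCompl, aeval_X, dif_neg hj]

lemma killCompl_surjective :
    Function.Surjective (killCompl hg : MvPolynomial τ R →ₐ[R] MvPolynomial σ R) :=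
  fun f => ⟨rename g f, killCompl_rename_app hg f⟩

end CommSemiring

variable [CommRing R]

lemma ker_killCompl :
    RingHom.ker (killCompl hg : MvPolynomial τ R →ₐ[R] MvPolynomial σ R) =
      Ideal.span (X '' (Set.range g)ᶜ) := by
  set K : Ideal (MvPolynomial τ R) := Ideal.span (X '' (Set.range g)ᶜ)
  apply le_antisymm
  · have mk_rename_killCompl : (Ideal.Quotient.mkₐ R K).comp ((rename g).comp (killCompl hg)) =
        Ideal.Quotient.mkₐ R K := by
      ext j
      by_cases hj : j ∈ Set.range g
      · obtain ⟨i, rfl⟩ := hj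
        simp [killCompl_X_apply]
      · have : X j ∈ K := Ideal.subset_span ⟨j, hj, rfl⟩
        simpa [killCompl_X_of_notMem_range hg hj] using
          (Ideal.Quotient.eq_zero_iff_mem.2 this).symm
    intro f hf
    rw [← Ideal.Quotient.eq_zero_iff_mem]
    simpa [RingHom.mem_ker.1 hf] using (DFunLike.congr_fun mk_rename_killCompl f).symm
  · rw [Ideal.span_le]
    rintro _ ⟨j, hj, rfl⟩
    exact killCompl_X_of_notMem_range hg hj

end KillCompl

lemma ker_killCompl_castSucc {R : Type*} [CommRing R] (d : ℕ) :
    RingHom.ker (killCompl (Fin.castSucc_injective d) :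
      MvPolynomial (Fin (d + 1)) R →ₐ[R] MvPolynomial (Fin d) R) =
      Ideal.span {X (Fin.last d)} := by
  have compl_range : (Set.range (Fin.castSucc : Fin d → Fin (d + 1)))ᶜ = {Fin.last d} := by
    ext i
    simp [← Fin.last_le_iff, Fin.le_def]
  rw [ker_killCompl, compl_range, Set.image_singleton]

lemma killCompl_castSucc_sum_sq_add_X_last_cube {R : Type*} [CommSemiring R] (d : ℕ) :
    killCompl (Fin.castSucc_injective d)
      ((∑ i : Fin d, (X i.castSucc : MvPolynomial (Fin (d + 1)) R) ^ 2) + X (Fin.last d) ^ 3) =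
      ∑ i : Fin d, X i ^ 2 := by
  have killCompl_X_last :
      killCompl (Fin.castSucc_injective d) (X (Fin.last d) : MvPolynomial _ R) = 0 :=
    killCompl_X_of_notMem_range _ (by simp)
  simp [killCompl_X_apply, killCompl_X_last]

/-- The ideal `(xᵢ ^ q, f)` whose colength, for `q = p ^ e`, is the value at `e` of the
Hilbert–Kunz function of `f`. -/
noncomputable def hilbertKunzIdeal {R σ : Type*} [CommSemiring R] (q : ℕ) (f : MvPolynomial σ R) :
    Ideal (MvPolynomial σ R) :=
  Ideal.span (Set.range (fun i => X i ^ q) ∪ {f})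

section HilbertKunz

variable {R σ τ : Type*}

lemma X_pow_mem_hilbertKunzIdeal [CommSemiring R] (q : ℕ) (f : MvPolynomial σ R) (i : σ) :
    X i ^ q ∈ hilbertKunzIdeal q f :=
  Ideal.subset_span (.inl ⟨i, rfl⟩)

lemma map_killCompl_hilbertKunzIdeal [CommSemiring R] {g : σ → τ} (hg : Function.Injective g)
    {q : ℕ} (hq : q ≠ 0) (f : MvPolynomial τ R) :
    (hilbertKunzIdeal q f).map (killCompl hg) = hilbertKunzIdeal q (killCompl hg f) := by
  apply le_antisymm
  · rw [hilbertKunzIdeal, Ideal.map_span, Ideal.span_le]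
    rintro _ ⟨_, ⟨j, rfl⟩ | rfl, rfl⟩
    · by_cases hj : j ∈ Set.range g
      · obtain ⟨i, rfl⟩ := hj
        simpa [killCompl_X_apply] using X_pow_mem_hilbertKunzIdeal q _ i
      · simp [killCompl_X_of_notMem_range hg hj, hq]
    · exact Ideal.subset_span (.inr rfl)
  · rw [hilbertKunzIdeal, Ideal.span_le]
    rintro _ (⟨i, rfl⟩ | rfl)
    · simpa [killCompl_X_apply] using
        Ideal.mem_map_of_mem (killCompl hg) (X_pow_mem_hilbertKunzIdeal q f (g i))
    · exact Ideal.mem_map_of_mem _ (Ideal.subset_span (.inr rfl))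

end HilbertKunz

theorem HK1_A1_mul_p_ge_A2_general {k : Type*} [Field k] {p : ℕ} (hp : p ≠ 0) (d e : ℕ)
    (f : MvPolynomial (Fin (d + 1)) k) :
    p ^ e * HKfun k d p e (killCompl (Fin.castSucc_injective d) f) ≥ HKfun k (d + 1) p e f := by
  set I := hilbertKunzIdeal (p ^ e) f
  have X_last_pow : (Ideal.Quotient.mk I (X (Fin.last d))) ^ p ^ e = 0 := by
    rw [← map_pow, Ideal.Quotient.eq_zero_iff_mem]
    exact X_pow_mem_hilbertKunzIdeal _ f _
  calc HKfun k (d + 1) p e f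
    _ = finrank k (MvPolynomial (Fin (d + 1)) k ⧸ I) := rfl
    _ ≤ p ^ e * finrank k
          ((MvPolynomial (Fin (d + 1)) k ⧸ I) ⧸
            Ideal.span {Ideal.Quotient.mk I (X (Fin.last d))}) :=
      finrank_le_mul_finrank_quotient_span_of_pow_eq_zero X_last_pow
    _ = p ^ e * HKfun k d p e (killCompl (Fin.castSucc_injective d) f) := by
      rw [finrank_quotient_quotient_span_mk_eq (killCompl_surjective _) (ker_killCompl_castSucc d),
        map_killCompl_hilbertKunzIdeal _ (pow_ne_zero e hp)]
      rfl

/-- For every prime `p > 3` and `d ≥ 2`, `p · HK_1(R_{p,d−1}) ≥ HK_1(S_{p,d})`. -/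
theorem HK1_A1_mul_p_ge_A2 (p : ℕ) (hp : p.Prime) (hp3 : 3 < p)
    (k : Type*) [Field k] [CharP k p] (d : ℕ) (hd : 2 ≤ d) :
    p * HKfun k d p 1 (∑ i : Fin d, X i ^ 2) ≥
      HKfun k (d + 1) p 1
        ((∑ i : Fin d, (X (i.castSucc) : MvPolynomial (Fin (d + 1)) k) ^ 2) +
          X (Fin.last d) ^ 3) := by
  rw [← killCompl_castSucc_sum_sq_add_X_last_cube]
  simpa only [pow_one] using HK1_A1_mul_p_ge_A2_general hp.ne_zero d 1 _
end

section
/- Let k be an algebraically closed field of characteristic 2, let n ≥ 0, and let v, w be elements of the formal power series ring k[[x_0,…,x_{n−1}]] (multivariate power series in n variables) with v a unit. Then there exists t ∈ k[[x_0,…,x_{n−1}]] such that t² + v·t + w = 0; moreover, if w is a unit then t can be taken to be a unit. -/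
/-!
In characteristic `p` the map `t ↦ t ^ p + v * t` is additive, so a root `c` of the equation of
constant coefficients can be subtracted off, which leaves an equation `t = b + a * t ^ p` whose `b`
has zero constant coefficient. The additive operator `L f = a * f ^ p` raises the order of such
series, hence `t = ∑ i, L^[i] b` converges and solves it.
-/

open Filter MvPowerSeries
open scoped MvPowerSeries.WithPiTopology

theorem tsum_iterate_eq_add_map_tsum_iterate {M : Type*} [AddCommMonoid M] [TopologicalSpace M]
    [ContinuousAdd M] [T2Space M] {L : M →+ M} (hL : Continuous L) {b : M}
    (hb : Summable fun i ↦ L^[i] b) :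
    ∑' i, L^[i] b = b + L (∑' i, L^[i] b) := by
  have map_sum : HasSum (fun i ↦ L^[i + 1] b) (L (∑' i, L^[i] b)) := by
    simpa only [Function.comp_def, Function.iterate_succ_apply'] using hb.hasSum.map L hL
  calc ∑' i, L^[i] b
    _ = b + ∑' i, L^[i + 1] b := tsum_eq_zero_add' map_sum.summable
    _ = b + L (∑' i, L^[i] b) := by rw [map_sum.tsum_eq]

section Order

variable {σ R : Type*} [Semiring R]

theorem order_add_one_le_order_mul_pow {p : ℕ} (hp : 2 ≤ p) (a : MvPowerSeries σ R)
    {f : MvPowerSeries σ R} (hf : constantCoeff f = 0) :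
    f.order + 1 ≤ (a * f ^ p).order :=
  calc f.order + 1
    _ ≤ f.order + f.order := by gcongr; exact one_le_order_iff_constCoeff_eq_zero.mpr hf
    _ = 2 • f.order := (two_nsmul _).symm
    _ ≤ p • f.order := nsmul_le_nsmul_left zero_le hp
    _ ≤ (f ^ p).order := le_order_pow p
    _ ≤ a.order + (f ^ p).order := le_add_self
    _ ≤ (a * f ^ p).order := le_order_mul

variable {L : MvPowerSeries σ R → MvPowerSeries σ R} {b : MvPowerSeries σ R}

theorem natCast_add_one_le_order_iterate
    (hL : ∀ f, constantCoeff f = 0 → f.order + 1 ≤ (L f).order) (hb : constantCoeff b = 0)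
    (i : ℕ) : (i : ℕ∞) + 1 ≤ (L^[i] b).order := by
  induction i with
  | zero => simpa using one_le_order_iff_constCoeff_eq_zero.mpr hb
  | succ i ih =>
    have iterate_constantCoeff : constantCoeff (L^[i] b) = 0 :=
      one_le_order_iff_constCoeff_eq_zero.mp (le_add_self.trans ih)
    rw [Function.iterate_succ_apply', Nat.cast_succ]
    exact (add_le_add_left ih 1).trans (hL _ iterate_constantCoeff)

theorem summable_iterate_of_order_add_one_le [TopologicalSpace R]
    (hL : ∀ f, constantCoeff f = 0 → f.order + 1 ≤ (L f).order) (hb : constantCoeff b = 0) :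
    Summable fun i ↦ L^[i] b := by
  refine WithPiTopology.summable_of_tendsto_order_atTop_nhds_top ?_
  rw [ENat.tendsto_nhds_top_iff_natCast_lt]
  intro n
  filter_upwards [eventually_ge_atTop n] with i hi
  calc (n : ℕ∞)
    _ ≤ i := mod_cast hi
    _ < i + 1 := mod_cast i.lt_succ_self
    _ ≤ (L^[i] b).order := natCast_add_one_le_order_iterate hL hb i

end Order

theorem charP_mvPowerSeries {σ R : Type*} [Semiring R] (p : ℕ) [CharP R p] :
    CharP (MvPowerSeries σ R) p :=
  charP_of_injective_ringHom C_injective p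

section CharP

variable {σ R : Type*} [CommRing R] (p : ℕ) [Fact p.Prime] [CharP R p]

theorem exists_eq_add_mul_pow_char (a : MvPowerSeries σ R) {b : MvPowerSeries σ R}
    (hb : constantCoeff b = 0) : ∃ t : MvPowerSeries σ R, t = b + a * t ^ p := by
  have := charP_mvPowerSeries (σ := σ) (R := R) p
  let : TopologicalSpace R := ⊥
  have : DiscreteTopology R := ⟨rfl⟩
  let L : MvPowerSeries σ R →+ MvPowerSeries σ R :=
    (AddMonoidHom.mulLeft a).comp (frobenius (MvPowerSeries σ R) p).toAddMonoidHom
  have L_continuous : Continuous L := continuous_const.mul (continuous_pow p)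
  have L_summable : Summable fun i ↦ L^[i] b :=
    summable_iterate_of_order_add_one_le
      (fun _ ↦ order_add_one_le_order_mul_pow (Fact.out : p.Prime).two_le a) hb
  exact ⟨_, tsum_iterate_eq_add_map_tsum_iterate L_continuous L_summable⟩

theorem exists_pow_char_add_mul_add_eq_zero_iff {v : MvPowerSeries σ R} (hv : IsUnit v)
    (w : MvPowerSeries σ R) :
    (∃ t, t ^ p + v * t + w = 0) ↔
      ∃ c, c ^ p + constantCoeff v * c + constantCoeff w = 0 := by
  refine ⟨fun ⟨t, ht⟩ ↦ ⟨constantCoeff t, by simpa using congrArg constantCoeff ht⟩, ?_⟩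
  rintro ⟨c, hc⟩
  have := charP_mvPowerSeries (σ := σ) (R := R) p
  obtain ⟨u, huv⟩ := hv.exists_left_inv
  let w' := C c ^ p + v * C c + w
  have w'_constantCoeff : constantCoeff w' = 0 := by simpa [w'] using hc
  obtain ⟨t, ht⟩ := exists_eq_add_mul_pow_char p (-u) (b := -u * w') (by simp [w'_constantCoeff])
  have t_root : t ^ p + v * t + w' = 0 := by linear_combination v * ht - (t ^ p + w') * huv
  refine ⟨t + C c, ?_⟩
  rw [add_pow_char]
  linear_combination t_root

end CharP

theorem isUnit_of_pow_add_mul_add_eq_zero {R : Type*} [CommRing R] {n : ℕ} (hn : n ≠ 0)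
    {t v w : R} (hw : IsUnit w) (ht : t ^ n + v * t + w = 0) : IsUnit t := by
  have t_dvd : t ∣ t ^ n + v * t := dvd_add (dvd_pow_self t hn) (dvd_mul_left t v)
  rw [eq_neg_of_add_eq_zero_left ht, dvd_neg] at t_dvd
  exact isUnit_of_dvd_unit t_dvd hw

theorem quadratic_solvable_char_two_general {σ k : Type*} [Field k] [IsSepClosed k] (p : ℕ)
    [Fact p.Prime] [CharP k p] (v w : MvPowerSeries σ k) (hv : IsUnit v) :
    (∃ t : MvPowerSeries σ k, t ^ p + v * t + w = 0) ∧
      (IsUnit w → ∃ t : MvPowerSeries σ k, IsUnit t ∧ t ^ p + v * t + w = 0) := by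
  have hp : p.Prime := Fact.out
  have v_constantCoeff : constantCoeff v ≠ 0 := (hv.map constantCoeff).ne_zero
  obtain ⟨c, hc⟩ := IsSepClosed.exists_root_C_mul_X_pow_add_C_mul_X_add_C' p p 1
    (constantCoeff v) (constantCoeff w) dvd_rfl hp.two_le v_constantCoeff
  rw [one_mul] at hc
  obtain ⟨t, ht⟩ := (exists_pow_char_add_mul_add_eq_zero_iff p hv w).mpr ⟨c, hc⟩
  exact ⟨⟨t, ht⟩, fun hw ↦ ⟨t, isUnit_of_pow_add_mul_add_eq_zero hp.ne_zero hw ht, ht⟩⟩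

/-- In characteristic 2, over an algebraically closed field, the quadratic equation
`t² + v·t + w = 0` with `v` a unit has a solution in the multivariate power series ring;
moreover, if `w` is a unit then the solution can be taken to be a unit. -/
theorem quadratic_solvable_char_two (k : Type*) [Field k] [IsAlgClosed k] [CharP k 2]
    (n : ℕ) (v w : MvPowerSeries (Fin n) k) (hv : IsUnit v) :
    (∃ t : MvPowerSeries (Fin n) k, t ^ 2 + v * t + w = 0) ∧
      (IsUnit w → ∃ t : MvPowerSeries (Fin n) k, IsUnit t ∧ t ^ 2 + v * t + w = 0) :=
  quadratic_solvable_char_two_general 2 v w hv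
end
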